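/- Let A and B be n×n matrices with nonnegative real entries, let g ∈ ℝ^n be nonnegative and h ∈ ℝ^n positive with g ≤ h (entrywise), and let α > 0, β > 0 be reals. Then h^− (α^{−1}A ⊕ β^{−1}B)* g ≤ 1 if and only if all three of the following hold: (i) α ≥ γ := max_{k=1,…,n−1} (h^− A^{⊗k} g)^{1/k}; (ii) β ≥ δ := max_{k=1,…,n−1} (h^− B^{⊗k} g)^{1/k}; and (iii) β ≥ max_{k=1,…,n−2} max_{m=1,…,n−k−1} α^{−m/k}·(h^− F_{km} g)^{1/k}, where F_{km} denotes the entrywise maximum, over all tuples of nonnegative integers (i_0, i_1, …, i_k) with i_0 + i_1 + ⋯ + i_k = m, of the max-times products A^{⊗i_0} ⊗ B ⊗ A^{⊗i_1} ⊗ B ⊗ ⋯ ⊗ B ⊗ A^{⊗i_k} (with exactly k factors B). -/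

import Mathlib

/-!
The power `(α⁻¹A ⊕ β⁻¹B)^{⊗p}` expands, entry by entry, into the maximum of the weighted chains
`α^{-m} β^{-k} A^{⊗i_0} ⊗ B ⊗ ⋯ ⊗ B ⊗ A^{⊗i_k}` with `k + m = p` and `m = i_0 + ⋯ + i_k`.
One half (`weight_mul_chain_le`) says that each weighted chain lies below the power; the other
(`exists_pow_le_chain`) says that each entry of the power is dominated by a single weighted chain,
found by reading off which of the two matrices gives the maximum at each factor.

Hence the left-hand side says that `h^- C g ≤ α^m β^k` for every chain `C` with `k + m ≤ n - 1`.
The chains with `k = 0` are the powers of `A`, those with `m = 0` are the powers of `B`, the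
identity (`k = m = 0`) contributes nothing because `g ≤ h`, and the remaining ones are collected
in the matrices `F_{km}`. Extracting `k`-th roots turns these three families of
inequalities into the three stated conditions.
-/

open scoped BigOperators

/-- Max-times matrix product: `(A ⊗ B) i j = max_k A i k * B k j`. -/
noncomputable def mtMul {n : ℕ} (A B : Matrix (Fin n) (Fin n) ℝ) : Matrix (Fin n) (Fin n) ℝ :=
  fun i j => ⨆ k, A i k * B k j

/-- Max-times matrix power, with `A^{⊗0}` the identity matrix. -/
noncomputable def mtPow {n : ℕ} (A : Matrix (Fin n) (Fin n) ℝ) : ℕ → Matrix (Fin n) (Fin n) ℝ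
  | 0 => 1
  | k + 1 => mtMul A (mtPow A k)

/-- Tropical trace: `tr A = max_i A i i`. -/
noncomputable def mtTrace {n : ℕ} (A : Matrix (Fin n) (Fin n) ℝ) : ℝ :=
  ⨆ i, A i i

/-- The function `Tr(A) = max_{k=1,…,n} tr(A^{⊗k})`. -/
noncomputable def mtTr {n : ℕ} (A : Matrix (Fin n) (Fin n) ℝ) : ℝ :=
  ⨆ k ∈ Finset.Icc 1 n, mtTrace (mtPow A k)

/-- Kleene star: entrywise maximum of `I, A, A^{⊗2}, …, A^{⊗(n-1)}`. -/
noncomputable def mtStar {n : ℕ} (A : Matrix (Fin n) (Fin n) ℝ) : Matrix (Fin n) (Fin n) ℝ :=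
  fun i j => ⨆ k ∈ Finset.range n, mtPow A k i j

/-- Max-times matrix-vector product: `(A ⊗ x) i = max_j A i j * x j`. -/
noncomputable def mtVec {n : ℕ} (A : Matrix (Fin n) (Fin n) ℝ) (x : Fin n → ℝ) : Fin n → ℝ :=
  fun i => ⨆ j, A i j * x j

/-- The alternating product `A^{⊗v 0} ⊗ B ⊗ A^{⊗v 1} ⊗ B ⊗ ⋯ ⊗ B ⊗ A^{⊗v k}`
(with exactly `k` factors `B`). -/
noncomputable def mtChain {n : ℕ} (A B : Matrix (Fin n) (Fin n) ℝ) :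
    (k : ℕ) → (Fin (k + 1) → ℕ) → Matrix (Fin n) (Fin n) ℝ
  | 0, v => mtPow A (v 0)
  | k + 1, v => mtMul (mtPow A (v 0)) (mtMul B (mtChain A B k fun t => v t.succ))

/-- `F_{km}`: the entrywise maximum, over all tuples `(i_0,…,i_k)` of nonnegative integers
with `i_0 + ⋯ + i_k = m`, of the products `A^{⊗i_0} ⊗ B ⊗ A^{⊗i_1} ⊗ ⋯ ⊗ B ⊗ A^{⊗i_k}`. -/
noncomputable def mtF {n : ℕ} (A B : Matrix (Fin n) (Fin n) ℝ) (k m : ℕ) :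
    Matrix (Fin n) (Fin n) ℝ :=
  fun i j => ⨆ v : { v : Fin (k + 1) → ℕ // ∑ t, v t = m }, mtChain A B k v.1 i j

/-- `h^− M g = max_{i,j} M i j * g j / h i`. -/
noncomputable def mtHMG {n : ℕ} (h : Fin n → ℝ) (M : Matrix (Fin n) (Fin n) ℝ)
    (g : Fin n → ℝ) : ℝ :=
  ⨆ i, ⨆ j, M i j * g j / h i

/-- Max-times spectral radius `λ = max_{k=1,…,n} (tr(A^{⊗k}))^{1/k}`. -/
noncomputable def mtSpecR {n : ℕ} (A : Matrix (Fin n) (Fin n) ℝ) : ℝ :=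
  ⨆ k ∈ Finset.Icc 1 n, (mtTrace (mtPow A k)) ^ (1 / (k : ℝ))

/-- `γ = max_{k=1,…,n-1} (h^− A^{⊗k} g)^{1/k}`. -/
noncomputable def mtBnd {n : ℕ} (h : Fin n → ℝ) (A : Matrix (Fin n) (Fin n) ℝ)
    (g : Fin n → ℝ) : ℝ :=
  ⨆ k ∈ Finset.Icc 1 (n - 1), (mtHMG h (mtPow A k) g) ^ (1 / (k : ℝ))

/-- The function `G`. -/
noncomputable def mtG {n : ℕ} (A B : Matrix (Fin n) (Fin n) ℝ) (h g : Fin n → ℝ)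
    (s : ℝ) : ℝ :=
  max (⨆ k ∈ Finset.Icc 1 (n - 1), ⨆ m ∈ Finset.Icc 1 (n - k),
        s ^ (-(m : ℝ) / (k : ℝ)) * (mtTrace (mtF A B k m)) ^ (1 / (k : ℝ)))
      (⨆ k ∈ Finset.Icc 1 (n - 2), ⨆ m ∈ Finset.Icc 1 (n - k - 1),
        s ^ (-(m : ℝ) / (k : ℝ)) * (mtHMG h (mtF A B k m) g) ^ (1 / (k : ℝ)))

/-- The function `H`. -/
noncomputable def mtH {n : ℕ} (A B : Matrix (Fin n) (Fin n) ℝ) (h g : Fin n → ℝ)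
    (t : ℝ) : ℝ :=
  max (⨆ k ∈ Finset.Icc 1 (n - 1), ⨆ m ∈ Finset.Icc 1 (n - k),
        t ^ (-(k : ℝ) / (m : ℝ)) * (mtTrace (mtF A B k m)) ^ (1 / (m : ℝ)))
      (⨆ k ∈ Finset.Icc 1 (n - 2), ⨆ m ∈ Finset.Icc 1 (n - k - 1),
        t ^ (-(k : ℝ) / (m : ℝ)) * (mtHMG h (mtF A B k m) g) ^ (1 / (m : ℝ)))

/-! ### Real suprema as finite maxima -/

section Suprema

/-- A bounded maximum written with junk-valued real suprema behaves as a maximum as soon as the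
bound is nonnegative, since the suprema over the empty membership proofs are `0`. -/
lemma biSup_le_iff_of_nonneg (s : Finset ℕ) (f : ℕ → ℝ) {c : ℝ} (hc : 0 ≤ c) :
    (⨆ k ∈ s, f k) ≤ c ↔ ∀ k ∈ s, f k ≤ c := by
  constructor
  · intro H k hk
    have hb : BddAbove (Set.range fun k => ⨆ _ : k ∈ s, f k) := by
      refine Set.Finite.bddAbove (((s.finite_toSet.image f).insert 0).subset ?_)
      rintro _ ⟨k, rfl⟩
      by_cases hk : k ∈ s
      · right
        exact ⟨k, hk, by simp [hk]⟩
      · left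
        simp [hk]
    have h1 := le_ciSup hb k
    simp only [hk, ciSup_unique] at h1
    exact h1.trans H
  · intro H
    exact Real.iSup_le (fun k => Real.iSup_le (fun hk => H k hk) hc) hc

lemma iSup_fin_le_iff {n : ℕ} (f : Fin n → ℝ) {c : ℝ} (hc : 0 ≤ c) :
    (⨆ k, f k) ≤ c ↔ ∀ k, f k ≤ c :=
  ⟨fun H k => (le_ciSup (Set.finite_range f).bddAbove k).trans H, fun H => Real.iSup_le H hc⟩

end Suprema

/-! ### Max-times products, powers and chains -/

section MaxTimes

variable {n : ℕ}

lemma mtHMG_le_iff (h g : Fin n → ℝ) (M : Matrix (Fin n) (Fin n) ℝ) {c : ℝ} (hc : 0 ≤ c) :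
    mtHMG h M g ≤ c ↔ ∀ i j, M i j * g j / h i ≤ c := by
  simp only [mtHMG, iSup_fin_le_iff _ hc]

lemma mtHMG_nonneg {h g : Fin n → ℝ} {M : Matrix (Fin n) (Fin n) ℝ} (hM : ∀ i j, 0 ≤ M i j)
    (hg : ∀ i, 0 ≤ g i) (hh : ∀ i, 0 < h i) : 0 ≤ mtHMG h M g :=
  Real.iSup_nonneg fun i => Real.iSup_nonneg fun j =>
    div_nonneg (mul_nonneg (hM i j) (hg j)) (hh i).le

lemma mtMul_le_iff (A B : Matrix (Fin n) (Fin n) ℝ) (i j : Fin n) {c : ℝ} (hc : 0 ≤ c) :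
    mtMul A B i j ≤ c ↔ ∀ l, A i l * B l j ≤ c :=
  iSup_fin_le_iff _ hc

lemma le_mtMul (A B : Matrix (Fin n) (Fin n) ℝ) (i l j : Fin n) :
    A i l * B l j ≤ mtMul A B i j :=
  le_ciSup (f := fun l => A i l * B l j) (Set.finite_range _).bddAbove l

lemma exists_mtMul_eq (A B : Matrix (Fin n) (Fin n) ℝ) (i j : Fin n) :
    ∃ l, A i l * B l j = mtMul A B i j := by
  have : Nonempty (Fin n) := ⟨i⟩
  exact exists_eq_ciSup_of_finite (f := fun l => A i l * B l j)

lemma mtMul_nonneg {A B : Matrix (Fin n) (Fin n) ℝ} (hA : ∀ i j, 0 ≤ A i j)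
    (hB : ∀ i j, 0 ≤ B i j) (i j : Fin n) : 0 ≤ mtMul A B i j :=
  Real.iSup_nonneg fun l => mul_nonneg (hA i l) (hB l j)

lemma one_nonneg' (i j : Fin n) : 0 ≤ (1 : Matrix (Fin n) (Fin n) ℝ) i j := by
  rw [Matrix.one_apply]; split_ifs <;> norm_num

lemma one_mtMul {B : Matrix (Fin n) (Fin n) ℝ} (hB : ∀ i j, 0 ≤ B i j) : mtMul 1 B = B := by
  ext i j
  apply le_antisymm
  · rw [mtMul_le_iff _ _ _ _ (hB i j)]
    intro l
    rw [Matrix.one_apply]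
    split_ifs with hil
    · simp [hil]
    · simpa using hB i j
  · simpa using le_mtMul 1 B i i j

lemma mtPow_nonneg {A : Matrix (Fin n) (Fin n) ℝ} (hA : ∀ i j, 0 ≤ A i j) (k : ℕ) :
    ∀ i j, 0 ≤ mtPow A k i j := by
  induction k with
  | zero => exact one_nonneg'
  | succ k ih => exact mtMul_nonneg hA ih

lemma mtPow_mul_mtPow_le {A : Matrix (Fin n) (Fin n) ℝ} (hA : ∀ i j, 0 ≤ A i j) (a b : ℕ) :
    ∀ i l j, mtPow A a i l * mtPow A b l j ≤ mtPow A (a + b) i j := by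
  induction a with
  | zero =>
    intro i l j
    have h1 := le_mtMul 1 (mtPow A b) i l j
    rw [one_mtMul (mtPow_nonneg hA b)] at h1
    simpa [mtPow] using h1
  | succ a ih =>
    intro i l j
    obtain ⟨l', hl'⟩ := exists_mtMul_eq A (mtPow A a) i l
    have e : a + 1 + b = (a + b) + 1 := by omega
    rw [e, mtPow, mtPow, ← hl', mul_assoc]
    exact (mul_le_mul_of_nonneg_left (ih l' l j) (hA i l')).trans (le_mtMul _ _ i l' j)

lemma pow_mul_mtPow_le {A M : Matrix (Fin n) (Fin n) ℝ} (hA : ∀ i j, 0 ≤ A i j) {a : ℝ}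
    (ha : 0 ≤ a) (hAM : ∀ i j, a * A i j ≤ M i j) (p : ℕ) :
    ∀ i j, a ^ p * mtPow A p i j ≤ mtPow M p i j := by
  induction p with
  | zero => intro i j; simp [mtPow]
  | succ p ih =>
    intro i j
    obtain ⟨l, hl⟩ := exists_mtMul_eq A (mtPow A p) i j
    rw [mtPow, mtPow, ← hl]
    calc a ^ (p + 1) * (A i l * mtPow A p l j)
        = (a * A i l) * (a ^ p * mtPow A p l j) := by ring
      _ ≤ M i l * mtPow M p l j :=
          mul_le_mul (hAM i l) (ih l j) (mul_nonneg (pow_nonneg ha _) (mtPow_nonneg hA p l j))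
            ((mul_nonneg ha (hA i l)).trans (hAM i l))
      _ ≤ _ := le_mtMul _ _ i l j

lemma mtChain_nonneg {A B : Matrix (Fin n) (Fin n) ℝ} (hA : ∀ i j, 0 ≤ A i j)
    (hB : ∀ i j, 0 ≤ B i j) (k : ℕ) (v : Fin (k + 1) → ℕ) :
    ∀ i j, 0 ≤ mtChain A B k v i j := by
  induction k with
  | zero => exact mtPow_nonneg hA _
  | succ k ih => exact mtMul_nonneg (mtPow_nonneg hA _) (mtMul_nonneg hB (ih _))

/-- If `a • A ≤ M` and `b • B ≤ M` entrywise, then every chain, weighted by `a` for each factor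
`A` and by `b` for each factor `B`, lies below the power of `M` of the same total length. -/
lemma weight_mul_chain_le {A B M : Matrix (Fin n) (Fin n) ℝ} (hA : ∀ i j, 0 ≤ A i j)
    (hB : ∀ i j, 0 ≤ B i j) {a b : ℝ} (ha : 0 ≤ a) (hb : 0 ≤ b)
    (hAM : ∀ i j, a * A i j ≤ M i j) (hBM : ∀ i j, b * B i j ≤ M i j)
    (k : ℕ) (v : Fin (k + 1) → ℕ) :
    ∀ i j, a ^ (∑ t, v t) * b ^ k * mtChain A B k v i j ≤ mtPow M (k + ∑ t, v t) i j := by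
  have hM : ∀ i j, 0 ≤ M i j := fun i j => (mul_nonneg ha (hA i j)).trans (hAM i j)
  induction k with
  | zero =>
    intro i j
    simpa [mtChain] using pow_mul_mtPow_le hA ha hAM (v 0) i j
  | succ k ih =>
    intro i j
    set w : Fin (k + 1) → ℕ := fun t => v t.succ with hw
    have hs : ∑ t, v t = v 0 + ∑ t, w t := Fin.sum_univ_succ v
    obtain ⟨l, hl⟩ := exists_mtMul_eq (mtPow A (v 0)) (mtMul B (mtChain A B k w)) i j
    obtain ⟨l', hl'⟩ := exists_mtMul_eq B (mtChain A B k w) l j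
    have e : k + 1 + (v 0 + ∑ t, w t) = v 0 + ((k + ∑ t, w t) + 1) := by omega
    rw [mtChain, ← hw, ← hl, ← hl', hs, e]
    have hBC : (b * B l l') * (a ^ (∑ t, w t) * b ^ k * mtChain A B k w l' j)
        ≤ mtPow M ((k + ∑ t, w t) + 1) l j :=
      (mul_le_mul (hBM l l') (ih w l' j)
        (mul_nonneg (by positivity) (mtChain_nonneg hA hB k w l' j)) (hM l l')).trans
        (le_mtMul _ _ l l' j)
    calc a ^ (v 0 + ∑ t, w t) * b ^ (k + 1) *
          (mtPow A (v 0) i l * (B l l' * mtChain A B k w l' j))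
        = (a ^ v 0 * mtPow A (v 0) i l) *
          ((b * B l l') * (a ^ (∑ t, w t) * b ^ k * mtChain A B k w l' j)) := by ring
      _ ≤ mtPow M (v 0) i l * mtPow M ((k + ∑ t, w t) + 1) l j :=
          mul_le_mul (pow_mul_mtPow_le hA ha hAM _ i l) hBC
            (mul_nonneg (mul_nonneg hb (hB l l'))
              (mul_nonneg (by positivity) (mtChain_nonneg hA hB k w l' j)))
            (mtPow_nonneg hM _ i l)
      _ ≤ _ := mtPow_mul_mtPow_le hM _ _ i l j

/-- Left multiplication by `A` only increases the first exponent of a chain. -/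
lemma mul_chain_le {A B : Matrix (Fin n) (Fin n) ℝ} (hA : ∀ i j, 0 ≤ A i j)
    (hB : ∀ i j, 0 ≤ B i j) (k : ℕ) (v : Fin (k + 1) → ℕ) (i l j : Fin n) :
    A i l * mtChain A B k v l j ≤
      mtChain A B k (Fin.cons (v 0 + 1) fun t => v t.succ) i j := by
  cases k with
  | zero => exact le_mtMul A (mtPow A (v 0)) i l j
  | succ k =>
    simp only [mtChain, Fin.cons_zero, Fin.cons_succ]
    set X := mtMul B (mtChain A B k fun t => v t.succ) with hX
    have hX0 : ∀ i j, 0 ≤ X i j := mtMul_nonneg hB (mtChain_nonneg hA hB k _)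
    obtain ⟨l', hl'⟩ := exists_mtMul_eq (mtPow A (v 0)) X l j
    rw [← hl', ← mul_assoc]
    exact (mul_le_mul_of_nonneg_right (le_mtMul A (mtPow A (v 0)) i l l') (hX0 l' j)).trans
      (le_mtMul (mtPow A (v 0 + 1)) X i l' j)

lemma mul_chain_le' {A B : Matrix (Fin n) (Fin n) ℝ} (hA : ∀ i j, 0 ≤ A i j)
    (hB : ∀ i j, 0 ≤ B i j) (k : ℕ) (v : Fin (k + 1) → ℕ) (i l j : Fin n) :
    B i l * mtChain A B k v l j ≤ mtChain A B (k + 1) (Fin.cons 0 v) i j := by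
  simp only [mtChain, Fin.cons_zero, Fin.cons_succ, mtPow]
  rw [one_mtMul (mtMul_nonneg hB (mtChain_nonneg hA hB k v))]
  exact le_mtMul B _ i l j

/-- Each entry of a power of `a • A ⊕ b • B` is dominated by one weighted chain of the same
length. -/
lemma exists_pow_le_chain {A B : Matrix (Fin n) (Fin n) ℝ} (hA : ∀ i j, 0 ≤ A i j)
    (hB : ∀ i j, 0 ≤ B i j) {a b : ℝ} (ha : 0 ≤ a) (hb : 0 ≤ b) (p : ℕ) :
    ∀ i j, ∃ (k : ℕ) (v : Fin (k + 1) → ℕ), k + ∑ t, v t = p ∧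
      mtPow (fun i j => max (a * A i j) (b * B i j)) p i j ≤
        a ^ (∑ t, v t) * b ^ k * mtChain A B k v i j := by
  induction p with
  | zero =>
    intro i j
    exact ⟨0, fun _ => 0, by simp, by simp [mtChain, mtPow]⟩
  | succ p ih =>
    intro i j
    set M : Matrix (Fin n) (Fin n) ℝ := fun i j => max (a * A i j) (b * B i j) with hM
    obtain ⟨l, hl⟩ := exists_mtMul_eq M (mtPow M p) i j
    obtain ⟨k, v, hkv, hle⟩ := ih l j
    have hMl : 0 ≤ M i l := le_max_of_le_left (mul_nonneg ha (hA i l))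
    have h1 := mul_le_mul_of_nonneg_left hle hMl
    rw [hl] at h1
    rcases max_choice (a * A i l) (b * B i l) with hc | hc
    · have hs : ∑ t, (Fin.cons (v 0 + 1) fun t => v t.succ : Fin (k + 1) → ℕ) t
          = (∑ t, v t) + 1 := by
        rw [Fin.sum_univ_succ, Fin.sum_univ_succ v]
        simp only [Fin.cons_zero, Fin.cons_succ]
        omega
      refine ⟨k, Fin.cons (v 0 + 1) fun t => v t.succ, by omega, h1.trans ?_⟩
      rw [hs]
      have hMA : M i l = a * A i l := hc
      calc M i l * (a ^ (∑ t, v t) * b ^ k * mtChain A B k v l j)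
          = a ^ ((∑ t, v t) + 1) * b ^ k * (A i l * mtChain A B k v l j) := by
            rw [hMA]; ring
        _ ≤ _ := mul_le_mul_of_nonneg_left (mul_chain_le hA hB k v i l j) (by positivity)
    · have hs : ∑ t, (Fin.cons 0 v : Fin (k + 2) → ℕ) t = ∑ t, v t := by
        rw [Fin.sum_univ_succ]
        simp
      refine ⟨k + 1, Fin.cons 0 v, by omega, h1.trans ?_⟩
      rw [hs]
      have hMB : M i l = b * B i l := hc
      calc M i l * (a ^ (∑ t, v t) * b ^ k * mtChain A B k v l j)
          = a ^ (∑ t, v t) * b ^ (k + 1) * (B i l * mtChain A B k v l j) := by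
            rw [hMB]; ring
        _ ≤ _ := mul_le_mul_of_nonneg_left (mul_chain_le' hA hB k v i l j) (by positivity)

lemma mtChain_zero_eq {A B : Matrix (Fin n) (Fin n) ℝ} (hB : ∀ i j, 0 ≤ B i j) (k : ℕ)
    (v : Fin (k + 1) → ℕ) (hv : ∀ t, v t = 0) : mtChain A B k v = mtPow B k := by
  induction k with
  | zero => simp [mtChain, mtPow, hv]
  | succ k ih =>
    rw [mtChain, hv 0, ih _ fun t => hv t.succ]
    exact one_mtMul (mtMul_nonneg hB (mtPow_nonneg hB k))

/-- The left-hand side of the theorem only involves the powers of `M` below `n`. -/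
lemma mtHMG_star_le_iff {h g : Fin n → ℝ} (M : Matrix (Fin n) (Fin n) ℝ)
    (hg : ∀ i, 0 ≤ g i) (hh : ∀ i, 0 < h i) :
    mtHMG h (mtStar M) g ≤ 1 ↔ ∀ p < n, ∀ i j, mtPow M p i j * g j / h i ≤ 1 := by
  rw [mtHMG_le_iff h g _ zero_le_one]
  have key : ∀ i j, mtStar M i j * g j / h i ≤ 1 ↔
      ∀ p ∈ Finset.range n, mtPow M p i j * g j / h i ≤ 1 := by
    intro i j
    simp only [mtStar, mul_div_assoc]
    have hr : 0 ≤ g j / h i := div_nonneg (hg j) (hh i).le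
    simp only [Real.iSup_mul_of_nonneg hr]
    exact biSup_le_iff_of_nonneg _ _ zero_le_one
  simp only [key, Finset.mem_range]
  exact ⟨fun H p hp i j => H i j p hp, fun H i j p hp => H p hp i j⟩

/-- The supremum defining `F_{km}` is a genuine one: the chains involved are bounded by an entry
of `(A ⊕ B)^{⊗(k+m)}`. -/
lemma mtHMG_mtF_le_iff {A B : Matrix (Fin n) (Fin n) ℝ} (hA : ∀ i j, 0 ≤ A i j)
    (hB : ∀ i j, 0 ≤ B i j) {h g : Fin n → ℝ} (hg : ∀ i, 0 ≤ g i) (hh : ∀ i, 0 < h i)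
    (k m : ℕ) {c : ℝ} (hc : 0 ≤ c) :
    mtHMG h (mtF A B k m) g ≤ c ↔ ∀ v : Fin (k + 1) → ℕ, ∑ t, v t = m →
      ∀ i j, mtChain A B k v i j * g j / h i ≤ c := by
  rw [mtHMG_le_iff h g _ hc]
  constructor
  · intro H v hv i j
    refine le_trans ?_ (H i j)
    have hb : BddAbove (Set.range fun v : { v : Fin (k + 1) → ℕ // ∑ t, v t = m } =>
        mtChain A B k v.1 i j) := by
      refine ⟨mtPow (fun i j => max (A i j) (B i j)) (k + m) i j, ?_⟩
      rintro _ ⟨⟨v, rfl⟩, rfl⟩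
      simpa using weight_mul_chain_le (M := fun i j => max (A i j) (B i j)) hA hB
        zero_le_one zero_le_one (fun i j => by simp) (fun i j => by simp) k v i j
    have h1 : mtChain A B k v i j ≤ mtF A B k m i j := le_ciSup hb ⟨v, hv⟩
    exact div_le_div_of_nonneg_right (mul_le_mul_of_nonneg_right h1 (hg j)) (hh i).le
  · intro H i j
    have hr : 0 ≤ g j / h i := div_nonneg (hg j) (hh i).le
    rw [mul_div_assoc, mtF, Real.iSup_mul_of_nonneg hr]
    refine Real.iSup_le (fun v => ?_) hc
    rw [← mul_div_assoc]
    exact H v.1 v.2 i j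

end MaxTimes

/-! ### Extraction of roots -/

lemma rpow_root_le_iff {x y : ℝ} (hx : 0 ≤ x) (hy : 0 ≤ y) {k : ℕ} (hk : 1 ≤ k) :
    x ^ (1 / (k : ℝ)) ≤ y ↔ x ≤ y ^ k := by
  have hk' : (0 : ℝ) < k := by exact_mod_cast hk
  rw [one_div, Real.rpow_inv_le_iff_of_pos hx hy hk', Real.rpow_natCast]

lemma rpow_mul_root_le_iff {x y a : ℝ} (hx : 0 ≤ x) (hy : 0 ≤ y) (ha : 0 < a) {k : ℕ} (m : ℕ)
    (hk : 1 ≤ k) :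
    a ^ (-(m : ℝ) / (k : ℝ)) * x ^ (1 / (k : ℝ)) ≤ y ↔ x ≤ a ^ m * y ^ k := by
  have e : a ^ (-(m : ℝ) / (k : ℝ)) = ((a ^ m)⁻¹) ^ (1 / (k : ℝ)) := by
    rw [div_eq_mul_one_div, Real.rpow_mul ha.le, Real.rpow_neg ha.le, Real.rpow_natCast]
  have hp : 0 < a ^ m := pow_pos ha m
  rw [e, ← Real.mul_rpow (inv_nonneg.2 hp.le) hx,
    rpow_root_le_iff (mul_nonneg (inv_nonneg.2 hp.le) hx) hy hk, inv_mul_le_iff₀ hp]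

/-! ### Expansion of the conditions into entrywise inequalities -/

section Expansion

variable {n : ℕ}

lemma mtBnd_le_iff {A : Matrix (Fin n) (Fin n) ℝ} (hA : ∀ i j, 0 ≤ A i j)
    {h g : Fin n → ℝ} (hg : ∀ i, 0 ≤ g i) (hh : ∀ i, 0 < h i) {a : ℝ} (ha : 0 ≤ a) :
    mtBnd h A g ≤ a ↔ ∀ k ∈ Finset.Icc 1 (n - 1), ∀ i j, mtPow A k i j * g j / h i ≤ a ^ k := by
  rw [mtBnd, biSup_le_iff_of_nonneg _ _ ha]
  refine forall₂_congr fun k hk => ?_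
  rw [rpow_root_le_iff (mtHMG_nonneg (mtPow_nonneg hA k) hg hh) ha (Finset.mem_Icc.1 hk).1,
    mtHMG_le_iff h g _ (pow_nonneg ha k)]

lemma star_le_iff_chain {A B : Matrix (Fin n) (Fin n) ℝ}
    (hA : ∀ i j, 0 ≤ A i j) (hB : ∀ i j, 0 ≤ B i j)
    {g h : Fin n → ℝ} (hg : ∀ i, 0 ≤ g i) (hh : ∀ i, 0 < h i)
    {α β : ℝ} (hα : 0 < α) (hβ : 0 < β) :
    mtHMG h (mtStar (fun i j => max (α⁻¹ * A i j) (β⁻¹ * B i j))) g ≤ 1 ↔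
      ∀ (k : ℕ) (v : Fin (k + 1) → ℕ), k + ∑ t, v t < n →
        ∀ i j, mtChain A B k v i j * g j / h i ≤ α ^ (∑ t, v t) * β ^ k := by
  refine (mtHMG_star_le_iff _ hg hh).trans ?_
  have hα' : 0 ≤ α⁻¹ := inv_nonneg.2 hα.le
  have hβ' : 0 ≤ β⁻¹ := inv_nonneg.2 hβ.le
  have key : ∀ (k m : ℕ) (x : ℝ), α⁻¹ ^ m * β⁻¹ ^ k * x ≤ 1 ↔ x ≤ α ^ m * β ^ k := by
    intro k m x
    have hp : 0 < α ^ m * β ^ k := by positivity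
    rw [inv_pow, inv_pow, ← mul_inv, inv_mul_le_iff₀ hp, mul_one]
  constructor
  · intro H k v hkv i j
    have hr : 0 ≤ g j / h i := div_nonneg (hg j) (hh i).le
    have h1 := weight_mul_chain_le (M := fun i j => max (α⁻¹ * A i j) (β⁻¹ * B i j)) hA hB
      hα' hβ' (fun i j => le_max_left _ _) (fun i j => le_max_right _ _) k v i j
    have h2 := (mul_le_mul_of_nonneg_right h1 hr).trans
      ((mul_div_assoc _ _ _).symm.le.trans (H _ hkv i j))
    rw [mul_assoc, key, ← mul_div_assoc] at h2
    exact h2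
  · intro H p hp i j
    have hr : 0 ≤ g j / h i := div_nonneg (hg j) (hh i).le
    obtain ⟨k, v, hkv, hle⟩ := exists_pow_le_chain hA hB hα' hβ' p i j
    rw [mul_div_assoc]
    refine (mul_le_mul_of_nonneg_right hle hr).trans ?_
    rw [mul_assoc, key, ← mul_div_assoc]
    exact H k v (by omega) i j

end Expansion

/-- `h^− (α⁻¹A ⊕ β⁻¹B)* g ≤ 1` iff `α ≥ γ`, `β ≥ δ` and
`β ≥ max_{k,m} α^{−m/k} (h^− F_{km} g)^{1/k}`. -/
theorem star_bound_le_one_iff {n : ℕ} (A B : Matrix (Fin n) (Fin n) ℝ)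
    (hA : ∀ i j, 0 ≤ A i j) (hB : ∀ i j, 0 ≤ B i j)
    (g h : Fin n → ℝ) (hg : ∀ i, 0 ≤ g i) (hh : ∀ i, 0 < h i) (hgh : ∀ i, g i ≤ h i)
    (α β : ℝ) (hα : 0 < α) (hβ : 0 < β) :
    mtHMG h (mtStar (fun i j => max (α⁻¹ * A i j) (β⁻¹ * B i j))) g ≤ 1 ↔
      (mtBnd h A g ≤ α ∧ mtBnd h B g ≤ β ∧
        (⨆ k ∈ Finset.Icc 1 (n - 2), ⨆ m ∈ Finset.Icc 1 (n - k - 1),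
          α ^ (-(m : ℝ) / (k : ℝ)) * (mtHMG h (mtF A B k m) g) ^ (1 / (k : ℝ))) ≤ β) := by
  have hF : ∀ k m i j, 0 ≤ mtF A B k m i j := fun k m i j =>
    Real.iSup_nonneg fun v => mtChain_nonneg hA hB k v.1 i j
  have h3 : (⨆ k ∈ Finset.Icc 1 (n - 2), ⨆ m ∈ Finset.Icc 1 (n - k - 1),
          α ^ (-(m : ℝ) / (k : ℝ)) * (mtHMG h (mtF A B k m) g) ^ (1 / (k : ℝ))) ≤ β ↔
      ∀ k ∈ Finset.Icc 1 (n - 2), ∀ m ∈ Finset.Icc 1 (n - k - 1),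
        ∀ v : Fin (k + 1) → ℕ, ∑ t, v t = m →
          ∀ i j, mtChain A B k v i j * g j / h i ≤ α ^ m * β ^ k := by
    rw [biSup_le_iff_of_nonneg _ _ hβ.le]
    refine forall₂_congr fun k hk => ?_
    rw [biSup_le_iff_of_nonneg _ _ hβ.le]
    refine forall₂_congr fun m _ => ?_
    rw [rpow_mul_root_le_iff (mtHMG_nonneg (hF k m) hg hh) hβ.le hα m (Finset.mem_Icc.1 hk).1,
      mtHMG_mtF_le_iff hA hB hg hh k m (by positivity)]
  refine (star_le_iff_chain hA hB hg hh hα hβ).trans ?_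
  rw [mtBnd_le_iff hA hg hh hα.le,
    mtBnd_le_iff hB hg hh hβ.le, h3]
  simp only [Finset.mem_Icc]
  constructor
  · intro H
    refine ⟨fun k hk i j => ?_, fun k hk i j => ?_, ?_⟩
    · simpa [mtChain] using H 0 (fun _ => k) (by simp; omega) i j
    · have h1 := H k (fun _ => 0) (by simp; omega) i j
      rw [mtChain_zero_eq hB k _ fun _ => rfl] at h1
      simpa using h1
    · rintro k hk m hm v rfl i j
      exact H k v (by omega) i j
  · rintro ⟨H1, H2, H3⟩ k v hkv i j
    rcases Nat.eq_zero_or_pos (∑ t, v t) with hm | hm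
    · have hv : ∀ t, v t = 0 := fun t => by simpa using (Finset.sum_eq_zero_iff.1 hm) t
      rw [mtChain_zero_eq hB k v hv, hm, pow_zero, one_mul]
      rcases Nat.eq_zero_or_pos k with rfl | hk
      · -- The identity matrix is the only place where `g ≤ h` enters.
        rw [mtPow, pow_zero, div_le_one (hh i), Matrix.one_apply]
        split_ifs with hij
        · simpa [hij] using hgh j
        · simpa using (hh i).le
      · exact H2 k (by omega) i j
    · rcases Nat.eq_zero_or_pos k with rfl | hk
      · simpa [mtChain] using H1 (v 0) (by simp at hm hkv; omega) i j
      · exact H3 k (by omega) _ (by omega) v rfl i j
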